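/- For every z ∈ ℂ such that z·id_K − 𝒯 is invertible in the bounded operators on K and z·id_H − T is invertible in the bounded operators on H, one has the resolvent identity (z − T)⁻¹ ∘ B = P ∘ (z − 𝒯)⁻¹ ∘ S ∘ Q as bounded operators from H to H. (This is the operator-algebraic content of the paper's Lemma 4.1, (z − T_R)⁻¹B = P(z − 𝒯_ℛ)⁻¹𝒮(P*P)⁻¹P*.) -/

import Mathlib

/-!
STATEMENT 4 (operator-algebraic content of Lemma 4.1 of the paper):
with `Q ∘ P = id`, `S² = S`, `𝒯 = S ∘ ℛ ∘ S`, `B = P ∘ S ∘ Q`, `T = P ∘ 𝒯 ∘ Q`,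
if `z - 𝒯` and `z - T` are invertible in the bounded operators, then
`(z - T)⁻¹ ∘ B = P ∘ (z - 𝒯)⁻¹ ∘ S ∘ Q`.
-/

open ContinuousLinearMap

theorem resolvent_identity
    {H K : Type*}
    [NormedAddCommGroup H] [InnerProductSpace ℂ H] [CompleteSpace H]
    [NormedAddCommGroup K] [InnerProductSpace ℂ K] [CompleteSpace K]
    (P : K →L[ℂ] H) (Q : H →L[ℂ] K)
    (hQP : Q.comp P = ContinuousLinearMap.id ℂ K)
    (S : K →L[ℂ] K) (hS : S.comp S = S)
    (ℛ : K →L[ℂ] K)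
    (𝒯 : K →L[ℂ] K) (h𝒯 : 𝒯 = S.comp (ℛ.comp S))
    (B : H →L[ℂ] H) (hB : B = P.comp (S.comp Q))
    (T : H →L[ℂ] H) (hT : T = P.comp (𝒯.comp Q))
    (z : ℂ)
    -- `z - T` is invertible in the bounded operators on `H`, with inverse `Tinv`
    (Tinv : H →L[ℂ] H)
    (hT1 : (z • ContinuousLinearMap.id ℂ H - T).comp Tinv = ContinuousLinearMap.id ℂ H)
    (hT2 : Tinv.comp (z • ContinuousLinearMap.id ℂ H - T) = ContinuousLinearMap.id ℂ H)
    -- `z - 𝒯` is invertible in the bounded operators on `K`, with inverse `𝒯inv`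
    (𝒯inv : K →L[ℂ] K)
    (h𝒯1 : (z • ContinuousLinearMap.id ℂ K - 𝒯).comp 𝒯inv = ContinuousLinearMap.id ℂ K)
    (h𝒯2 : 𝒯inv.comp (z • ContinuousLinearMap.id ℂ K - 𝒯) = ContinuousLinearMap.id ℂ K) :
    Tinv.comp B = P.comp (𝒯inv.comp (S.comp Q)) := by
  ext x
  have e1 := DFunLike.congr_fun h𝒯1 (S (Q x))
  have e2 := DFunLike.congr_fun hT2 (P (𝒯inv (S (Q x))))
  have e3 := DFunLike.congr_fun hQP (𝒯inv (S (Q x)))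
  simp only [ContinuousLinearMap.comp_apply, ContinuousLinearMap.sub_apply,
    ContinuousLinearMap.smul_apply, ContinuousLinearMap.id_apply] at e1 e2 e3
  have e4 : T (P (𝒯inv (S (Q x)))) = P (𝒯 (𝒯inv (S (Q x)))) := by
    rw [hT]
    simp only [ContinuousLinearMap.comp_apply, e3]
  rw [e4, ← map_smul, ← map_sub, e1] at e2
  rw [hB]
  simpa only [ContinuousLinearMap.comp_apply] using e2
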